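/- Let n ≥ 1 and m ≥ 1 be natural numbers, c ∈ ℝⁿ, and let b₁, b₂, a₀, a₁ ∈ ℤⁿ satisfy a₀·b₁ = 1, a₀·b₂ = 0, and a₁·b₂ = 1 (dot products in ℤⁿ). Then the set { (1/(mk+1))·(a + c) : a ∈ ℤⁿ, k ≥ 1 an integer, gcd(a·b₁, a·b₂) = 1 } is dense in ℝⁿ. -/

import Mathlib

/-!
Call `(x, y) ∈ ℤ²` primitive if `gcd x y = 1`. Any `(x, y)` is an integer multiple of a primitive
`(r, s)`; if `u r + v s = 1`, then `l (x, y) + (-v, u)` is primitive for every integer `l`, because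
its determinant against `(r, s)` is `-1`. When the two forms `a ↦ a·b₁` and `a ↦ a·b₂` are jointly
onto `ℤ²`, every `v ∈ ℤⁿ` therefore admits a `w ∈ ℤⁿ` such that the whole progression `l v + w`
takes primitive values. With `l = m j` and `k = d j`, the points `(m k + 1)⁻¹ (l v + w + c)` tend
to `v / d` as `j → ∞`, and the points `v / d` are dense.
-/

open Filter Topology

section Density

lemma tendsto_intFloor_mul_div_atTop {𝕜 : Type*} [Field 𝕜] [LinearOrder 𝕜] [IsStrictOrderedRing 𝕜]
    [FloorRing 𝕜] [TopologicalSpace 𝕜] [OrderTopology 𝕜] (a : 𝕜) :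
    Tendsto (fun x : 𝕜 ↦ (⌊a * x⌋ : 𝕜) / x) atTop (𝓝 a) := by
  have fract_div_tendsto : Tendsto (fun x : 𝕜 ↦ Int.fract (a * x) / x) atTop (𝓝 0) :=
    tendsto_bdd_div_atTop_nhds_zero (.of_forall fun _ ↦ Int.fract_nonneg _)
      (.of_forall fun _ ↦ (Int.fract_lt_one _).le) tendsto_id
  have sub_tendsto := fract_div_tendsto.const_sub a
  rw [sub_zero] at sub_tendsto
  refine sub_tendsto.congr' ?_
  filter_upwards [eventually_ne_atTop 0] with x hx
  rw [← Int.self_sub_fract, sub_div, mul_div_cancel_right₀ _ hx]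

lemma dense_setOf_exists_nsmul_mem_range_intCast (ι : Type*) :
    Dense {x : ι → ℝ | ∃ d : ℕ, 0 < d ∧ d • x ∈ ((Int.castAddHom ℝ).compLeft ι).range} := by
  intro x
  have floor_tendsto : Tendsto (fun (d : ℕ) i ↦ (⌊x i * d⌋ : ℝ) / d) atTop (𝓝 x) :=
    tendsto_pi_nhds.2 fun i ↦
      (tendsto_intFloor_mul_div_atTop (x i)).comp tendsto_natCast_atTop_atTop
  refine mem_closure_of_tendsto floor_tendsto ?_
  filter_upwards [eventually_gt_atTop 0] with d hd
  refine ⟨d, hd, fun i ↦ ⌊x i * d⌋, ?_⟩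
  ext i
  simp [mul_div_cancel₀, hd.ne']

lemma tendsto_inv_mul_add_one_smul_smul_add {𝕜 E : Type*} [Field 𝕜] [LinearOrder 𝕜]
    [IsStrictOrderedRing 𝕜] [TopologicalSpace 𝕜] [OrderTopology 𝕜] [AddCommGroup E] [Module 𝕜 E]
    [TopologicalSpace E] [ContinuousAdd E] [ContinuousSMul 𝕜 E] {d : 𝕜} (hd : d ≠ 0) (v w : E) :
    Tendsto (fun t : 𝕜 ↦ (d * t + 1)⁻¹ • (t • v + w)) atTop (𝓝 (d⁻¹ • v)) := by
  have near_zero : Tendsto (fun s : 𝕜 ↦ (d + s)⁻¹ • (v + s • w)) (𝓝 0) (𝓝 (d⁻¹ • v)) := by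
    have : ContinuousAt (fun s : 𝕜 ↦ (d + s)⁻¹ • (v + s • w)) 0 := by
      fun_prop (disch := simpa using hd)
    simpa [ContinuousAt] using this
  refine (near_zero.comp tendsto_inv_atTop_zero).congr' ?_
  filter_upwards [eventually_ne_atTop 0] with t ht
  have denom_eq : d * t + 1 = (d + t⁻¹) * t := by field_simp
  have vector_eq : t • v + w = t • (v + t⁻¹ • w) := by rw [smul_add, smul_inv_smul₀ ht]
  rw [Function.comp_apply, denom_eq, vector_eq, smul_smul, mul_inv, inv_mul_cancel_right₀ ht]

variable {L E : Type*} [AddCommGroup L] [AddCommGroup E] [Module ℝ E] [TopologicalSpace E]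
  [ContinuousAdd E] [ContinuousSMul ℝ E]

lemma dense_setOf_inv_smul_map_add_of_forall_exists_nsmul_add {f : L →+ E}
    (hf : Dense {x : E | ∃ d : ℕ, 0 < d ∧ d • x ∈ f.range}) {P : L → Prop}
    (hP : ∀ v, ∃ w, ∀ l : ℕ, P (l • v + w)) {m : ℕ} (hm : 0 < m) (c : E) :
    Dense {x : E | ∃ (a : L) (k : ℕ), 1 ≤ k ∧ P a ∧ x = (m * k + 1 : ℝ)⁻¹ • (f a + c)} := by
  refine (hf.mono ?_).of_closure
  rintro x ⟨d, hd, v, hv⟩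
  obtain ⟨w, hw⟩ := hP v
  have hd' : (d : ℝ) ≠ 0 := Nat.cast_ne_zero.2 hd.ne'
  have hx : (d : ℝ)⁻¹ • f v = x := by rw [hv, ← Nat.cast_smul_eq_nsmul ℝ, inv_smul_smul₀ hd']
  have multiples_tendsto : Tendsto (fun j : ℕ ↦ (m * j : ℝ)) atTop atTop :=
    tendsto_natCast_atTop_atTop.const_mul_atTop (Nat.cast_pos.2 hm)
  have progression_tendsto :=
    (tendsto_inv_mul_add_one_smul_smul_add hd' (f v) (f w + c)).comp multiples_tendsto
  rw [hx] at progression_tendsto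
  refine mem_closure_of_tendsto progression_tendsto ?_
  filter_upwards [eventually_gt_atTop 0] with j hj
  refine ⟨(m * j) • v + w, d * j, Nat.mul_pos hd hj, hw _, ?_⟩
  have denom_eq : (d * (m * j) + 1 : ℝ) = m * (d * j : ℕ) + 1 := by push_cast; ring
  rw [Function.comp_apply, denom_eq, map_add, map_nsmul, ← Nat.cast_smul_eq_nsmul ℝ (m * j),
    Nat.cast_mul m j, add_assoc]

end Density

section Coprimality

variable {R : Type*} [CommRing R]

lemma exists_forall_isCoprime_mul_add [IsDomain R] [IsBezout R] (x y : R) :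
    ∃ p q : R, ∀ l : R, IsCoprime (l * x + p) (l * y + q) := by
  classical
  let _ := IsBezout.toGCDDomain R
  obtain ⟨r, s, hx, hy, hrs⟩ := extract_gcd x y
  generalize gcd x y = g at hx hy
  obtain ⟨u, v, huv⟩ := (gcd_isUnit_iff r s).1 hrs
  refine ⟨-v, u, fun l ↦ ⟨-s, r, ?_⟩⟩
  subst hx hy
  linear_combination huv

variable {M : Type*} [AddCommGroup M] [Module R M] {φ ψ : M →ₗ[R] R}

lemma surjective_linearMap_prod_of_apply_eq_one {a₀ a₁ : M} (hφ₀ : φ a₀ = 1) (hψ₀ : ψ a₀ = 0)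
    (hψ₁ : ψ a₁ = 1) : Function.Surjective (φ.prod ψ) := by
  rintro ⟨p, q⟩
  exact ⟨(p - q * φ a₁) • a₀ + q • a₁, by simp [hφ₀, hψ₀, hψ₁]⟩

lemma exists_forall_isCoprime_apply_smul_add [IsDomain R] [IsBezout R]
    (hφψ : Function.Surjective (φ.prod ψ)) (v : M) :
    ∃ w : M, ∀ l : R, IsCoprime (φ (l • v + w)) (ψ (l • v + w)) := by
  obtain ⟨p, q, hpq⟩ := exists_forall_isCoprime_mul_add (φ v) (ψ v)
  obtain ⟨w, hw⟩ := hφψ (p, q)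
  obtain ⟨rfl, rfl⟩ := Prod.mk.inj hw
  exact ⟨w, fun l ↦ by simpa only [map_add, map_smul, smul_eq_mul] using hpq l⟩

end Coprimality

theorem stmt10_general {L E : Type*} [AddCommGroup L] [AddCommGroup E] [Module ℝ E]
    [TopologicalSpace E] [ContinuousAdd E] [ContinuousSMul ℝ E] {f : L →+ E}
    (hf : Dense {x : E | ∃ d : ℕ, 0 < d ∧ d • x ∈ f.range}) {φ ψ : L →ₗ[ℤ] ℤ}
    (hφψ : Function.Surjective (φ.prod ψ)) {m : ℕ} (hm : 0 < m) (c : E) :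
    Dense {x : E | ∃ (a : L) (k : ℕ), 1 ≤ k ∧ Int.gcd (φ a) (ψ a) = 1 ∧
      x = (m * k + 1 : ℝ)⁻¹ • (f a + c)} := by
  refine dense_setOf_inv_smul_map_add_of_forall_exists_nsmul_add hf (fun v ↦ ?_) hm c
  obtain ⟨w, hw⟩ := exists_forall_isCoprime_apply_smul_add hφψ v
  exact ⟨w, fun l ↦ Int.isCoprime_iff_gcd_eq_one.1 (by simpa only [natCast_zsmul] using hw l)⟩

/-- Refined density: if `a₀·b₁ = 1`, `a₀·b₂ = 0` and `a₁·b₂ = 1`, then the elements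
`(1/(mk+1))·(a + c)` with `a ∈ ℤⁿ`, `k ≥ 1` and `gcd(a·b₁, a·b₂) = 1` are dense
in `ℝⁿ`. -/
theorem stmt10 (n m : ℕ) (hn : 1 ≤ n) (hm : 1 ≤ m) (c : Fin n → ℝ)
    (b₁ b₂ a₀ a₁ : Fin n → ℤ)
    (h₀₁ : ∑ i, a₀ i * b₁ i = 1) (h₀₂ : ∑ i, a₀ i * b₂ i = 0)
    (h₁₂ : ∑ i, a₁ i * b₂ i = 1) :
    Dense {x : Fin n → ℝ | ∃ (a : Fin n → ℤ) (k : ℕ), 1 ≤ k ∧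
      Int.gcd (∑ i, a i * b₁ i) (∑ i, a i * b₂ i) = 1 ∧
      x = ((m * k + 1 : ℝ))⁻¹ • ((fun i => (a i : ℝ)) + c)} :=
  stmt10_general (dense_setOf_exists_nsmul_mem_range_intCast (Fin n))
    (surjective_linearMap_prod_of_apply_eq_one (φ := Fintype.linearCombination ℤ b₁)
      (ψ := Fintype.linearCombination ℤ b₂) h₀₁ h₀₂ h₁₂) hm c
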